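/- arXiv:2302.04786 — 2 statements merged into one kernel-verified Lean document; each statement's English description precedes it below -/
import Mathlib

section
/- Let K be a compact subset of ℝ^N, X a compact Hausdorff space, and T, A : C(K) → C(X) weakly nonlinear and monotone operators. Fix α ≥ α(K,u), and set p = Σ_{k=1}^N (pr_k + α)² ∈ C(K) and q_k = −pr_k − α ∈ C(K). Then for every f ∈ C(K) and every ε > 0 there exists δ > 0 such that ‖T(f)·A(1) − T(1)·A(f)‖ ≤ ε·‖T(1)‖·‖A(1)‖ + δ·{ ‖A(1)‖·‖T(p) − A(p)‖ + ‖A(p)‖·‖T(1) − A(1)‖ + 2·‖A(1)·A(p) − Σ_{k=1}^N (A(q_k))²‖ + 2·Σ_{k=1}^N ‖A(q_k)‖·‖T(q_k) − A(q_k)‖ }, where ‖·‖ is the sup-norm on C(X). -/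
/-- The restriction to `K ⊆ ℝ^N` of the `k`-th coordinate projection, as a continuous map. -/
noncomputable def coordCM {N : ℕ} (K : Set (EuclideanSpace ℝ (Fin N))) (k : Fin N) : C(K, ℝ) :=
  ⟨fun x => (x : EuclideanSpace ℝ (Fin N)) k,
    (EuclideanSpace.proj k).continuous.comp continuous_subtype_val⟩

/-- The deficit of positivity `α(K, u)` of `K ⊆ ℝ^N` in the direction `u = (1, …, 1)`:
the infimum of all `α ≥ 0` with `K + αu ⊆ ℝ₊^N`. -/
noncomputable def posDeficit {N : ℕ} (K : Set (EuclideanSpace ℝ (Fin N))) : ℝ :=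
  sInf {a : ℝ | 0 ≤ a ∧ ∀ x ∈ K, ∀ k : Fin N, 0 ≤ x k + a}

/-- `p = Σ_{k=1}^N (pr_k + α)²` as an element of `C(K)`. -/
noncomputable def testP {N : ℕ} (K : Set (EuclideanSpace ℝ (Fin N))) (α : ℝ) : C(K, ℝ) :=
  ∑ k : Fin N, (coordCM K k + ContinuousMap.const K α) ^ 2

/-- `q_k = −pr_k − α` as an element of `C(K)`. -/
noncomputable def testQ {N : ℕ} (K : Set (EuclideanSpace ℝ (Fin N))) (α : ℝ) (k : Fin N) :
    C(K, ℝ) :=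
  -(coordCM K k) - ContinuousMap.const K α

/-!
By compactness there is `δ > 0` with `f x ≤ f y + ε + δ * ∑ k, (q k x - q k y) ^ 2` for all `x` and
`y`. Expanding the square, the right-hand side is a combination of functions of `x` whose
coefficients depend on `y`, and these are nonnegative except at the constant function `1`: the cross
term is `2 * δ * (-q k y) * q k x` and `q k ≤ 0`. Sublinearity and translatability therefore let
one apply `g ↦ T g t` in `x` term by term, and then `g ↦ A g t` in `y`, as `T (q k) t ≤ 0`.
Exchanging the roles of `T` and `A` bounds `|T f * A 1 - T 1 * A f|` pointwise on `X`, and it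
remains to estimate `T p * A 1 + T 1 * A p - 2 * ∑ k, T (q k) * A (q k)` in norm.
-/

/-- Weakly nonlinear operators `C(Y) → E`: sublinear, and translatable in the direction of the
constant function `1`. The codomain is kept general so that the notion covers both operators into
`C(X)` and their evaluations at a point of `X`. -/
structure IsWeaklyNonlinear {Y E : Type*} [TopologicalSpace Y] [Add E] [LE E] [SMul ℝ E]
    (T : C(Y, ℝ) → E) : Prop where
  map_add_le : ∀ f g : C(Y, ℝ), T (f + g) ≤ T f + T g
  map_smul : ∀ a : ℝ, 0 ≤ a → ∀ f : C(Y, ℝ), T (a • f) = a • T f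
  map_add_smul_one_of_nonneg : ∀ f : C(Y, ℝ), ∀ a : ℝ, 0 ≤ a → T (f + a • 1) = T f + a • T 1

namespace IsWeaklyNonlinear

section Module

variable {Y E : Type*} [TopologicalSpace Y] [AddCommGroup E] [Preorder E] [Module ℝ E]
  {T : C(Y, ℝ) → E}

lemma map_zero (hT : IsWeaklyNonlinear T) : T 0 = 0 := by
  simpa using hT.map_smul 0 le_rfl 0

lemma map_nonneg (hT : IsWeaklyNonlinear T) (hT_mono : Monotone T) {f : C(Y, ℝ)} (hf : 0 ≤ f) :
    0 ≤ T f :=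
  hT.map_zero ▸ hT_mono hf

lemma map_nonpos (hT : IsWeaklyNonlinear T) (hT_mono : Monotone T) {f : C(Y, ℝ)} (hf : f ≤ 0) :
    T f ≤ 0 :=
  hT.map_zero ▸ hT_mono hf

lemma map_add_smul_one (hT : IsWeaklyNonlinear T) (f : C(Y, ℝ)) (a : ℝ) :
    T (f + a • 1) = T f + a • T 1 := by
  rcases le_total 0 a with ha | ha
  · exact hT.map_add_smul_one_of_nonneg f a ha
  · have h := hT.map_add_smul_one_of_nonneg (f + a • 1) (-a) (neg_nonneg.2 ha)
    rw [neg_smul, neg_smul, add_neg_cancel_right] at h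
    exact (eq_add_neg_iff_add_eq.1 h).symm

lemma map_smul_one (hT : IsWeaklyNonlinear T) (a : ℝ) : T (a • 1) = a • T 1 := by
  simpa [hT.map_zero] using hT.map_add_smul_one 0 a

lemma map_sum_smul_le [IsOrderedAddMonoid E] (hT : IsWeaklyNonlinear T) {ι : Type*} (s : Finset ι)
    {c : ι → ℝ} (hc : ∀ k, 0 ≤ c k) (q : ι → C(Y, ℝ)) :
    T (∑ k ∈ s, c k • q k) ≤ ∑ k ∈ s, c k • T (q k) := by
  simpa only [hT.map_smul _ (hc _)] using
    Finset.le_sum_of_subadditive T hT.map_zero.le hT.map_add_le s fun k ↦ c k • q k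

lemma map_add_sum_smul_add_smul_one_le [IsOrderedAddMonoid E] (hT : IsWeaklyNonlinear T)
    (g : C(Y, ℝ)) {ι : Type*} (s : Finset ι) {c : ι → ℝ} (hc : ∀ k, 0 ≤ c k) (q : ι → C(Y, ℝ))
    (b : ℝ) :
    T (g + ∑ k ∈ s, c k • q k + b • 1) ≤ T g + ∑ k ∈ s, c k • T (q k) + b • T 1 := by
  rw [hT.map_add_smul_one]
  gcongr
  exact (hT.map_add_le _ _).trans (by gcongr; exact hT.map_sum_smul_le s hc q)

end Module

lemma apply {Y X : Type*} [TopologicalSpace Y] [TopologicalSpace X] {T : C(Y, ℝ) → C(X, ℝ)}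
    (hT : IsWeaklyNonlinear T) (t : X) : IsWeaklyNonlinear fun g ↦ T g t where
  map_add_le f g := hT.map_add_le f g t
  map_smul a ha f := DFunLike.congr_fun (hT.map_smul a ha f) t
  map_add_smul_one_of_nonneg f a ha :=
    DFunLike.congr_fun (hT.map_add_smul_one_of_nonneg f a ha) t

section Functional

variable {Y Z ι : Type*} [TopologicalSpace Y] [TopologicalSpace Z] [Fintype ι]

theorem map_mul_map_one_le {φ : C(Y, ℝ) → ℝ} {ψ : C(Z, ℝ) → ℝ}
    (hφ : IsWeaklyNonlinear φ) (hφ_mono : Monotone φ)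
    (hψ : IsWeaklyNonlinear ψ) (hψ_mono : Monotone ψ)
    {q : ι → C(Y, ℝ)} (hq : ∀ k, q k ≤ 0) {r : ι → C(Z, ℝ)} (hr : ∀ k, r k ≤ 0)
    {f g : C(Y, ℝ)} {h : C(Z, ℝ)} (hfgh : ∀ x y, f x ≤ g x + h y - ∑ k, q k x * r k y) :
    φ f * ψ 1 ≤ φ g * ψ 1 + φ 1 * ψ h - ∑ k, φ (q k) * ψ (r k) := by
  have apply_fst (y : Z) : φ f ≤ φ g + ∑ k, -r k y * φ (q k) + h y * φ 1 := by
    have f_le : f ≤ g + ∑ k, (-r k y) • q k + h y • 1 := fun x ↦ by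
      simpa [ContinuousMap.sum_apply, mul_comm, sub_eq_add_neg, add_right_comm] using hfgh x y
    exact (hφ_mono f_le).trans <| hφ.map_add_sum_smul_add_smul_one_le g _
      (fun k ↦ neg_nonneg.2 (hr k y)) q (h y)
  have const_le : φ f • (1 : C(Z, ℝ)) ≤ φ 1 • h + ∑ k, (-φ (q k)) • r k + φ g • 1 := fun y ↦ by
    simpa [ContinuousMap.sum_apply, mul_comm, add_comm, add_left_comm] using apply_fst y
  have apply_snd := (hψ_mono const_le).trans <|
    hψ.map_add_sum_smul_add_smul_one_le _ _
      (fun k ↦ neg_nonneg.2 (hφ.map_nonpos hφ_mono (hq k))) r (φ g)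
  rw [hψ.map_smul_one, hψ.map_smul _ (hφ.map_nonneg hφ_mono zero_le_one)] at apply_snd
  simp only [smul_eq_mul, neg_mul, Finset.sum_neg_distrib] at apply_snd
  linarith

variable {φ ψ : C(Y, ℝ) → ℝ} {q : ι → C(Y, ℝ)} {f : C(Y, ℝ)} {ε δ : ℝ}

theorem map_mul_map_one_sub_le (hφ : IsWeaklyNonlinear φ) (hφ_mono : Monotone φ)
    (hψ : IsWeaklyNonlinear ψ) (hψ_mono : Monotone ψ) (hq : ∀ k, q k ≤ 0) (hδ : 0 ≤ δ)
    (hf : ∀ x y, f x ≤ f y + ε + δ * ∑ k, (q k x - q k y) ^ 2) :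
    φ f * ψ 1 - φ 1 * ψ f ≤ ε * (φ 1 * ψ 1) + δ * (φ (∑ k, q k ^ 2) * ψ 1 +
      φ 1 * ψ (∑ k, q k ^ 2) - 2 * ∑ k, φ (q k) * ψ (q k)) := by
  set p := ∑ k, q k ^ 2 with hp
  have separated (x y : Y) : f x ≤ (δ • p) x + (f + δ • p + ε • 1) y -
      ∑ k, q k x * ((2 * δ) • q k) y := by
    refine (hf x y).trans_eq ?_
    simp only [hp, ContinuousMap.add_apply, ContinuousMap.smul_apply, ContinuousMap.sum_apply,
      ContinuousMap.pow_apply, ContinuousMap.one_apply, smul_eq_mul, sub_sq,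
      Finset.sum_add_distrib, Finset.sum_sub_distrib, mul_assoc, mul_left_comm (q _ x),
      ← Finset.mul_sum]
    ring
  have hδq (k : ι) : (2 * δ) • q k ≤ 0 := smul_nonpos_of_nonneg_of_nonpos (by positivity) (hq k)
  have product_le := hφ.map_mul_map_one_le hφ_mono hψ hψ_mono hq hδq separated
  have map_le : ψ (f + δ • p + ε • 1) ≤ ψ f + δ * ψ p + ε * ψ 1 := by
    rw [hψ.map_add_smul_one, ← smul_eq_mul δ, ← hψ.map_smul δ hδ]
    exact add_le_add_left (hψ.map_add_le f (δ • p)) _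
  have map_one_mul_le := mul_le_mul_of_nonneg_left map_le (hφ.map_nonneg hφ_mono zero_le_one)
  simp only [hφ.map_smul δ hδ, hψ.map_smul (2 * δ) (by positivity), smul_eq_mul,
    mul_left_comm (φ (q _)), ← Finset.mul_sum] at product_le
  linarith

theorem abs_map_mul_map_one_sub_le (hφ : IsWeaklyNonlinear φ) (hφ_mono : Monotone φ)
    (hψ : IsWeaklyNonlinear ψ) (hψ_mono : Monotone ψ) (hq : ∀ k, q k ≤ 0) (hδ : 0 ≤ δ)
    (hf : ∀ x y, f x ≤ f y + ε + δ * ∑ k, (q k x - q k y) ^ 2) :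
    |φ f * ψ 1 - φ 1 * ψ f| ≤ ε * (φ 1 * ψ 1) + δ * (φ (∑ k, q k ^ 2) * ψ 1 +
      φ 1 * ψ (∑ k, q k ^ 2) - 2 * ∑ k, φ (q k) * ψ (q k)) := by
  refine abs_sub_le_iff.2 ⟨hφ.map_mul_map_one_sub_le hφ_mono hψ hψ_mono hq hδ hf, ?_⟩
  have swapped := hψ.map_mul_map_one_sub_le hψ_mono hφ hφ_mono hq hδ hf
  simp only [mul_comm (ψ _) (φ _)] at swapped
  linarith

end Functional

end IsWeaklyNonlinear

lemma exists_forall_le_add_mul_of_nonpos_of_eq_zero {Z : Type*} [TopologicalSpace Z]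
    [CompactSpace Z] {g d : Z → ℝ} (hg : Continuous g) (hd : Continuous d) (hd_nonneg : 0 ≤ d)
    (hgd : ∀ z, d z = 0 → g z ≤ 0) {ε : ℝ} (hε : 0 < ε) :
    ∃ δ : ℝ, 0 < δ ∧ ∀ z, g z ≤ ε + δ * d z := by
  let U (n : ℕ) : Set Z := {z | g z < ε + n * d z}
  have U_open (n : ℕ) : IsOpen (U n) := isOpen_lt hg (by fun_prop)
  have U_mono : Monotone U := fun m n hmn z (hz : g z < ε + m * d z) ↦
    hz.trans_le (by gcongr; exact hd_nonneg z)
  have U_cover : Set.univ ⊆ ⋃ n, U n := fun z _ ↦ Set.mem_iUnion.2 <| by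
    rcases (hd_nonneg z).eq_or_lt' with hz | hz
    · exact ⟨0, by simpa [U] using (hgd z hz).trans_lt hε⟩
    · obtain ⟨n, hn⟩ := exists_nat_gt (g z / d z)
      exact ⟨n, ((div_lt_iff₀ hz).1 hn).trans (lt_add_of_pos_left _ hε)⟩
  obtain ⟨n, hn⟩ := isCompact_univ.elim_directed_cover U U_open U_cover U_mono.directed_le
  refine ⟨n + 1, by positivity, fun z ↦ (hn (Set.mem_univ z)).le.trans ?_⟩
  gcongr
  exacts [hd_nonneg z, le_add_of_nonneg_right zero_le_one]

lemma exists_forall_le_add_add_mul_sum_sq {Y ι : Type*} [TopologicalSpace Y] [CompactSpace Y]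
    [Fintype ι] (q : ι → C(Y, ℝ)) {f : C(Y, ℝ)}
    (hfq : Function.FactorsThrough f fun y k ↦ q k y) {ε : ℝ} (hε : 0 < ε) :
    ∃ δ : ℝ, 0 < δ ∧ ∀ x y, f x ≤ f y + ε + δ * ∑ k, (q k x - q k y) ^ 2 := by
  let d (z : Y × Y) : ℝ := ∑ k, (q k z.1 - q k z.2) ^ 2
  have nonpos_of_eq_zero (z : Y × Y) (hz : d z = 0) : f z.1 - f z.2 ≤ 0 := by
    have hqz : ∀ k, q k z.1 = q k z.2 := by
      simpa [d, Finset.sum_eq_zero_iff_of_nonneg, sq_nonneg, sub_eq_zero] using hz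
    exact (sub_eq_zero.2 (hfq (funext hqz))).le
  obtain ⟨δ, hδ, hfd⟩ := exists_forall_le_add_mul_of_nonpos_of_eq_zero
    (g := fun z : Y × Y ↦ f z.1 - f z.2) (d := d) (by fun_prop) (by fun_prop)
    (fun z ↦ by positivity) nonpos_of_eq_zero hε
  refine ⟨δ, hδ, fun x y ↦ ?_⟩
  linarith [hfd (x, y)]

lemma norm_mul_add_mul_sub_two_mul_sum_le {R ι : Type*} [SeminormedCommRing R] [Fintype ι]
    (a b c d : R) (u v : ι → R) :
    ‖a * d + c * b - 2 * ∑ k, u k * v k‖ ≤ ‖d‖ * ‖a - b‖ + ‖b‖ * ‖c - d‖ +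
      2 * ‖d * b - ∑ k, v k ^ 2‖ + 2 * ∑ k, ‖v k‖ * ‖u k - v k‖ := by
  have decomposition : a * d + c * b - 2 * ∑ k, u k * v k =
      d * (a - b) + b * (c - d) + 2 • (d * b - ∑ k, v k ^ 2) -
        2 • ∑ k, v k * (u k - v k) := by
    simp only [mul_sub, Finset.sum_sub_distrib, mul_comm (v _) (u _), ← sq, two_nsmul]
    ring
  have norm_two_nsmul_le (r : R) : ‖2 • r‖ ≤ 2 * ‖r‖ := by
    simpa using norm_nsmul_le (n := 2) (a := r)
  rw [decomposition]
  refine (norm_sub_le _ _).trans (add_le_add (norm_add₃_le.trans ?_) ?_)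
  · gcongr <;> first | exact norm_mul_le _ _ | exact norm_two_nsmul_le _
  · refine (norm_two_nsmul_le _).trans ?_
    gcongr
    exact norm_sum_le_of_le _ fun k _ ↦ norm_mul_le _ _

theorem norm_a_priori_estimate_general {Y X ι : Type*} [TopologicalSpace Y] [CompactSpace Y]
    [TopologicalSpace X] [CompactSpace X] [Fintype ι] {q : ι → C(Y, ℝ)} (hq : ∀ k, q k ≤ 0)
    {f : C(Y, ℝ)} (hfq : Function.FactorsThrough f fun y k ↦ q k y) {ε : ℝ} (hε : 0 < ε) :
    ∃ δ : ℝ, 0 < δ ∧ ∀ T A : C(Y, ℝ) → C(X, ℝ), IsWeaklyNonlinear T → Monotone T →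
      IsWeaklyNonlinear A → Monotone A →
      ‖T f * A 1 - T 1 * A f‖ ≤
        ε * ‖T 1‖ * ‖A 1‖ +
        δ * (‖A 1‖ * ‖T (∑ k, q k ^ 2) - A (∑ k, q k ^ 2)‖ +
             ‖A (∑ k, q k ^ 2)‖ * ‖T 1 - A 1‖ +
             2 * ‖A 1 * A (∑ k, q k ^ 2) - ∑ k, A (q k) ^ 2‖ +
             2 * ∑ k, ‖A (q k)‖ * ‖T (q k) - A (q k)‖) := by
  obtain ⟨δ, hδ, hf⟩ := exists_forall_le_add_add_mul_sum_sq q hfq hε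
  refine ⟨δ, hδ, fun T A hT hT_mono hA hA_mono ↦
    (ContinuousMap.norm_le _ (by positivity)).2 fun t ↦ ?_⟩
  set p := ∑ k, q k ^ 2
  let defect : C(X, ℝ) := T p * A 1 + T 1 * A p - 2 * ∑ k, T (q k) * A (q k)
  calc |T f t * A 1 t - T 1 t * A f t|
      ≤ ε * (T 1 * A 1) t + δ * defect t := by
        simpa [defect, ContinuousMap.sum_apply, two_mul] using
          (hT.apply t).abs_map_mul_map_one_sub_le (fun _ _ h ↦ hT_mono h t)
            (hA.apply t) (fun _ _ h ↦ hA_mono h t) hq hδ.le hf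
    _ ≤ ε * ‖T 1 * A 1‖ + δ * ‖defect‖ := by
        gcongr <;> exact ContinuousMap.apply_le_norm _ t
    _ ≤ _ := by
        rw [mul_assoc ε]
        gcongr
        exacts [norm_mul_le _ _, norm_mul_add_mul_sub_two_mul_sum_le ..]

section TestFunctions

variable {N : ℕ} (K : Set (EuclideanSpace ℝ (Fin N)))

lemma testP_eq_sum_testQ_sq (α : ℝ) : testP K α = ∑ k, testQ K α k ^ 2 :=
  Finset.sum_congr rfl fun k _ ↦ by rw [testQ]; ring

lemma testQ_injective (α : ℝ) : Function.Injective fun (x : K) k ↦ testQ K α k x := by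
  intro x y hxy
  ext k
  exact neg_injective (sub_left_injective (congrFun hxy k))

variable {K}

lemma neg_apply_le_posDeficit (hK : Bornology.IsBounded K) {x : EuclideanSpace ℝ (Fin N)}
    (hx : x ∈ K) (k : Fin N) : -x k ≤ posDeficit K := by
  obtain ⟨R, hR, hKR⟩ := hK.exists_pos_norm_le
  refine le_csInf ⟨R, hR.le, fun y hy j ↦ ?_⟩ fun a ha ↦ neg_le_iff_add_nonneg'.2 (ha.2 x hx k)
  exact neg_le_iff_add_nonneg'.1 <|
    (neg_le_abs _).trans ((PiLp.norm_apply_le y j).trans (hKR y hy))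

lemma testQ_nonpos (hK : Bornology.IsBounded K) {α : ℝ} (hα : posDeficit K ≤ α) (k : Fin N) :
    testQ K α k ≤ 0 :=
  fun x ↦ sub_nonpos.2 ((neg_apply_le_posDeficit hK x.2 k).trans hα)

end TestFunctions

/-- **The a priori estimate (Corollary 1), sup-norm form.** For weakly nonlinear and monotone
operators `T, A : C(K) → C(X)` and `α ≥ α(K,u)`, every `f ∈ C(K)` and `ε > 0` admit a
`δ > 0` such that the displayed inequality between sup-norms holds. -/
theorem norm_a_priori_estimate
    {N : ℕ} (K : Set (EuclideanSpace ℝ (Fin N))) [CompactSpace K]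
    {X : Type*} [TopologicalSpace X] [CompactSpace X] [T2Space X]
    (T A : C(K, ℝ) → C(X, ℝ))
    (hTsub : ∀ f g : C(K, ℝ), T (f + g) ≤ T f + T g)
    (hTpos : ∀ (a : ℝ), 0 ≤ a → ∀ f : C(K, ℝ), T (a • f) = a • T f)
    (hTtr : ∀ f : C(K, ℝ), ∀ a : ℝ, 0 ≤ a → T (f + a • 1) = T f + a • T 1)
    (hTmono : Monotone T)
    (hAsub : ∀ f g : C(K, ℝ), A (f + g) ≤ A f + A g)
    (hApos : ∀ (a : ℝ), 0 ≤ a → ∀ f : C(K, ℝ), A (a • f) = a • A f)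
    (hAtr : ∀ f : C(K, ℝ), ∀ a : ℝ, 0 ≤ a → A (f + a • 1) = A f + a • A 1)
    (hAmono : Monotone A)
    (α : ℝ) (hα : posDeficit K ≤ α)
    (f : C(K, ℝ)) {ε : ℝ} (hε : 0 < ε) :
    ∃ δ : ℝ, 0 < δ ∧
      ‖T f * A 1 - T 1 * A f‖ ≤
        ε * ‖T 1‖ * ‖A 1‖ +
        δ * (‖A 1‖ * ‖T (testP K α) - A (testP K α)‖ +
             ‖A (testP K α)‖ * ‖T 1 - A 1‖ +
             2 * ‖A 1 * A (testP K α) - ∑ k : Fin N, (A (testQ K α k)) ^ 2‖ +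
             2 * ∑ k : Fin N, ‖A (testQ K α k)‖ * ‖T (testQ K α k) - A (testQ K α k)‖) := by
  obtain ⟨δ, hδ, estimate⟩ := norm_a_priori_estimate_general (X := X)
    (testQ_nonpos (isCompact_iff_compactSpace.2 ‹_›).isBounded hα)
    ((testQ_injective K α).factorsThrough f) hε
  rw [testP_eq_sum_testQ_sq]
  exact ⟨δ, hδ, estimate T A ⟨hTsub, hTpos, hTtr⟩ hTmono ⟨hAsub, hApos, hAtr⟩ hAmono⟩
end

section
/- Let K be a compact subset of ℝ^N, let E be an ordered Banach space, and let i : C(K) → E be an injective positive linear map with dense image, via which C(K) is identified with a subspace of E. Let X be a compact Hausdorff space and let T_n (n ∈ ℕ) and A be operators from E into C(X) that are sublinear, monotone, and translatable with respect to e = i(1). Assume (i) A(e)(t) > 0 for every t ∈ X; (ii) for some α ≥ α(K,u), A(e)·A(i(p)) = Σ_{k=1}^N (A(i(q_k)))², where p = Σ_{k=1}^N (pr_k + α)² and q_k = −pr_k − α; and (iii) sup_n ‖T_n‖ < ∞, where ‖T‖ = sup{‖T(f)‖ : ‖f‖ ≤ 1}. Then lim_{n→∞} ‖T_n(f) − A(f)‖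 = 0 for every f ∈ E if and only if lim_{n→∞} ‖T_n(g) − A(g)‖ = 0 for each of the N+2 test elements g ∈ {e, i(q_1), …, i(q_N), i(p)} (sup-norm on C(X)). -/
open Filter

open Topology
open scoped lp

/-!
Fix `t`. Condition (ii) says that the monotone sublinear functional `φ = A (i ·) t` satisfies
`φ (∑ (pr_k + α - σ_k)²) ≤ 0` for `σ_k = -φ (q_k) / φ 1 ≥ 0`. As `φ 1 > 0`, this function cannot be
bounded away from zero, so `σ - α u` is a point `s` of `K`, and `φ (‖· - s‖²) ≤ 0` forces
`φ f = f s * φ 1` for all `f`. Korovkin's classical comparison `|f - f s| ≤ ε + δ ‖· - s‖²` then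
bounds `T_n (i f) t - A (i f) t` by the errors on the test functions, uniformly in `t`.

To pass from `C(K)` to `E` one needs `A` to be continuous. A monotone sublinear map is bounded on
bounded sets of positive elements (otherwise a convergent series of positive elements has an
unbounded image), and the open mapping theorem, applied to the map `ℓ¹(E₊ ∩ ball) → E`,
`a ↦ ∑ a_s s`, shows that every `x` satisfies `±x ≤ u` for some `u` with `‖u‖ ≤ C ‖x‖`.
-/

section Sublinear

variable {V W F : Type*} [AddCommGroup V] [Module ℝ V] [AddCommGroup W] [Module ℝ W]
  [AddCommGroup F] [Preorder F] [Module ℝ F]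

/-- Sublinear maps into an ordered vector space: subadditive and positively homogeneous. -/
structure IsSublinear (T : V → F) : Prop where
  map_add_le : ∀ f g, T (f + g) ≤ T f + T g
  map_smul : ∀ a : ℝ, 0 ≤ a → ∀ f, T (a • f) = a • T f

/-- Sublinear maps that are translatable with respect to `e`. Translatability is required for
nonnegative scalars only; it extends to all scalars by `IsWeaklyNonlinear.map_add_smul`. -/
structure IsWeaklyNonlinear_s15 (e : V) (T : V → F) : Prop extends IsSublinear T where
  map_add_smul_of_nonneg : ∀ f, ∀ a : ℝ, 0 ≤ a → T (f + a • e) = T f + a • T e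

namespace IsSublinear

variable {T : V → F}

theorem map_zero (hT : IsSublinear T) : T 0 = 0 := by
  simpa using hT.map_smul 0 le_rfl 0

theorem map_nonneg [Preorder V] (hT : IsSublinear T) (hmono : Monotone T) {f : V} (hf : 0 ≤ f) :
    0 ≤ T f :=
  hT.map_zero ▸ hmono hf

theorem map_sub_map_le [IsOrderedAddMonoid F] (hT : IsSublinear T) (f g : V) :
    T f - T g ≤ T (f - g) := by
  simpa [sub_le_iff_le_add] using hT.map_add_le (f - g) g

theorem map_sum_smul_le [IsOrderedAddMonoid F] (hT : IsSublinear T) {ι : Type*} (s : Finset ι)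
    {c : ι → ℝ} (hc : ∀ k, 0 ≤ c k) (g : ι → V) :
    T (∑ k ∈ s, c k • g k) ≤ ∑ k ∈ s, c k • T (g k) := by
  simpa only [hT.map_smul _ (hc _)] using
    Finset.le_sum_of_subadditive T hT.map_zero.le hT.map_add_le s fun k => c k • g k

end IsSublinear

namespace IsWeaklyNonlinear_s15

variable {e : V} {T : V → F}

theorem map_add_smul (hT : IsWeaklyNonlinear_s15 e T) (f : V) (a : ℝ) :
    T (f + a • e) = T f + a • T e := by
  rcases le_total 0 a with ha | ha
  · exact hT.map_add_smul_of_nonneg f a ha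
  · have h := hT.map_add_smul_of_nonneg (f + a • e) (-a) (neg_nonneg.2 ha)
    rw [neg_smul, add_neg_cancel_right, neg_smul] at h
    rw [h, neg_add_cancel_right]

theorem comp_linearMap {e : W} {i : W →ₗ[ℝ] V} (hT : IsWeaklyNonlinear_s15 (i e) T) :
    IsWeaklyNonlinear_s15 e (T ∘ i) where
  map_add_le f g := by simpa using hT.map_add_le (i f) (i g)
  map_smul a ha f := by simpa using hT.map_smul a ha (i f)
  map_add_smul_of_nonneg f a ha := by simpa using hT.map_add_smul_of_nonneg (i f) a ha

theorem eval {X : Type*} [TopologicalSpace X] {T : V → C(X, ℝ)} (hT : IsWeaklyNonlinear_s15 e T)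
    (t : X) : IsWeaklyNonlinear_s15 e fun f => T f t where
  map_add_le f g := hT.map_add_le f g t
  map_smul a ha f := congr($(hT.map_smul a ha f) t)
  map_add_smul_of_nonneg f a ha := congr($(hT.map_add_smul_of_nonneg f a ha) t)

end IsWeaklyNonlinear_s15

end Sublinear

section OrderedBanach

variable {E : Type*} [NormedAddCommGroup E] [NormedSpace ℝ E]

theorem norm_tsum_smul_le_tsum_abs {ι : Type*} {v : ι → E} (hv : ∀ j, ‖v j‖ ≤ 1) {a : ι → ℝ}
    (ha : Summable a) : ‖∑' j, a j • v j‖ ≤ ∑' j, |a j| :=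
  tsum_of_norm_bounded ha.abs.hasSum fun j => by
    simpa [norm_smul] using mul_le_of_le_one_right (abs_nonneg (a j)) (hv j)

variable [CompleteSpace E]

theorem summable_smul_of_norm_le_one {ι : Type*} {v : ι → E} (hv : ∀ j, ‖v j‖ ≤ 1) {a : ι → ℝ}
    (ha : Summable a) : Summable fun j => a j • v j :=
  .of_norm_bounded ha.norm fun j => by
    simpa [norm_smul] using mul_le_of_le_one_right (abs_nonneg (a j)) (hv j)

theorem l1_summable {ι : Type*} (a : ℓ¹(ι, ℝ)) : Summable a :=
  (lp.memℓp a).summable_of_one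

theorem l1_norm_eq_tsum_abs {ι : Type*} (a : ℓ¹(ι, ℝ)) : ‖a‖ = ∑' j, |a j| := by
  simpa using lp.norm_eq_tsum_rpow (p := 1) (by norm_num) a

/-- The synthesis operator `a ↦ ∑ a_j v_j` of a family in the unit ball. -/
noncomputable def l1Synthesis {ι : Type*} (v : ι → E) (hv : ∀ j, ‖v j‖ ≤ 1) : ℓ¹(ι, ℝ) →L[ℝ] E :=
  LinearMap.mkContinuous
    { toFun := fun a => ∑' j, a j • v j
      map_add' := fun a b => by
        simp [add_smul, ← (summable_smul_of_norm_le_one hv (l1_summable a)).tsum_add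
          (summable_smul_of_norm_le_one hv (l1_summable b))]
      map_smul' := fun c a => by
        simp [mul_smul, (summable_smul_of_norm_le_one hv (l1_summable a)).tsum_const_smul c] }
    1 fun a => by
      simpa [l1_norm_eq_tsum_abs] using norm_tsum_smul_le_tsum_abs hv (l1_summable a)

theorem l1Synthesis_apply {ι : Type*} (v : ι → E) (hv : ∀ j, ‖v j‖ ≤ 1) (a : ℓ¹(ι, ℝ)) :
    l1Synthesis v hv a = ∑' j, a j • v j :=
  rfl

variable [Preorder E] [PosSMulMono ℝ E]

theorem l1Synthesis_surjective_of_generating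
    (hgen : ∀ x : E, ∃ u v : E, 0 ≤ u ∧ 0 ≤ v ∧ x = u - v) :
    Function.Surjective (l1Synthesis (fun s : {x : E // 0 ≤ x ∧ ‖x‖ ≤ 1} => (s : E))
      fun s => s.2.2) := by
  classical
  suffices hpos : ∀ u : E, 0 ≤ u → ∃ a, l1Synthesis
      (fun s : {x : E // 0 ≤ x ∧ ‖x‖ ≤ 1} => (s : E)) (fun s => s.2.2) a = u by
    intro x
    obtain ⟨u, v, hu, hv, rfl⟩ := hgen x
    obtain ⟨a, rfl⟩ := hpos u hu
    obtain ⟨b, rfl⟩ := hpos v hv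
    exact ⟨a - b, map_sub _ _ _⟩
  intro u hu
  rcases eq_or_ne u 0 with rfl | hu0
  · exact ⟨0, _root_.map_zero _⟩
  let s : {x : E // 0 ≤ x ∧ ‖x‖ ≤ 1} :=
    ⟨‖u‖⁻¹ • u, smul_nonneg (by positivity) hu, (norm_smul_inv_norm hu0).le⟩
  refine ⟨lp.single 1 s ‖u‖, ?_⟩
  rw [l1Synthesis_apply, tsum_eq_single s fun r hr => by simp [lp.single_apply, hr]]
  simp [s, smul_smul, hu0]

theorem exists_nonneg_ge_neg_le_norm_le [IsOrderedAddMonoid E] [OrderClosedTopology E]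
    (hgen : ∀ x : E, ∃ u v : E, 0 ≤ u ∧ 0 ≤ v ∧ x = u - v) :
    ∃ C : ℝ, ∀ x : E, ∃ u : E, 0 ≤ u ∧ x ≤ u ∧ -x ≤ u ∧ ‖u‖ ≤ C * ‖x‖ := by
  obtain ⟨C, -, hC⟩ := ContinuousLinearMap.exists_preimage_norm_le _
    (l1Synthesis_surjective_of_generating hgen)
  refine ⟨C, fun x => ?_⟩
  obtain ⟨a, rfl, ha⟩ := hC x
  set v : {x : E // 0 ≤ x ∧ ‖x‖ ≤ 1} → E := fun s => s
  have hv : ∀ s, ‖v s‖ ≤ 1 := fun s => s.2.2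
  have hsum := summable_smul_of_norm_le_one hv (l1_summable a)
  have hsum_abs := summable_smul_of_norm_le_one hv (l1_summable a).abs
  have smul_le : ∀ {c d : ℝ} (s), c ≤ d → c • v s ≤ d • v s := fun s hcd => by
    simpa [sub_smul] using smul_nonneg (sub_nonneg.2 hcd) s.2.1
  refine ⟨∑' s, |a s| • v s, tsum_nonneg fun s => smul_nonneg (abs_nonneg _) s.2.1, ?_, ?_, ?_⟩
  · exact hsum.tsum_le_tsum (fun s => smul_le s (le_abs_self _)) hsum_abs
  · rw [l1Synthesis_apply, ← tsum_neg]
    exact hsum.neg.tsum_le_tsum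
      (fun s => (neg_smul (a s) (v s)).symm.trans_le (smul_le s (neg_le_abs _))) hsum_abs
  · refine le_trans ?_ ha
    simpa [l1_norm_eq_tsum_abs] using norm_tsum_smul_le_tsum_abs hv (l1_summable a).abs

end OrderedBanach

section AutomaticContinuity

variable {E F : Type*} [NormedAddCommGroup E] [NormedSpace ℝ E]
  [NormedAddCommGroup F] [NormedSpace ℝ F] [Lattice F] [IsOrderedAddMonoid F] [HasSolidNorm F]
  {T : E → F}

namespace IsSublinear

theorem norm_map_le_mul_norm {F : Type*} [NormedAddCommGroup F] [NormedSpace ℝ F] [Preorder F]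
    {T : E → F} (hT : IsSublinear T) {M : ℝ} (hM : ∀ f, ‖f‖ ≤ 1 → ‖T f‖ ≤ M) (f : E) :
    ‖T f‖ ≤ M * ‖f‖ := by
  rcases eq_or_ne f 0 with rfl | hf
  · simp [hT.map_zero]
  have h := hM (‖f‖⁻¹ • f) (norm_smul_inv_norm hf).le
  rwa [hT.map_smul _ (by positivity), norm_smul, norm_inv, norm_norm,
    inv_mul_le_iff₀' (norm_pos_iff.2 hf)] at h

theorem lipschitzWith (hT : IsSublinear T) {M : ℝ} (hM : ∀ f, ‖f‖ ≤ 1 → ‖T f‖ ≤ M) :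
    LipschitzWith (2 * M).toNNReal T := by
  refine .of_dist_le' fun f g => ?_
  have abs_le : |T f - T g| ≤ |T (f - g)| + |T (g - f)| := by
    refine abs_le'.2 ⟨?_, ?_⟩
    · exact (hT.map_sub_map_le f g).trans
        ((le_abs_self _).trans (le_add_of_nonneg_right (abs_nonneg _)))
    · rw [neg_sub]
      exact (hT.map_sub_map_le g f).trans
        ((le_abs_self _).trans (le_add_of_nonneg_left (abs_nonneg _)))
  calc dist (T f) (T g) = ‖T f - T g‖ := dist_eq_norm _ _
    _ ≤ ‖|T (f - g)| + |T (g - f)|‖ :=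
        norm_le_norm_of_abs_le_abs (abs_le.trans (le_abs_self _))
    _ ≤ ‖T (f - g)‖ + ‖T (g - f)‖ := by
        simpa only [norm_abs_eq_norm] using norm_add_le |T (f - g)| |T (g - f)|
    _ ≤ M * ‖f - g‖ + M * ‖g - f‖ :=
        add_le_add (hT.norm_map_le_mul_norm hM _) (hT.norm_map_le_mul_norm hM _)
    _ = 2 * M * dist f g := by rw [norm_sub_rev g f, dist_eq_norm]; ring

variable [CompleteSpace E] [Preorder E] [IsOrderedAddMonoid E] [PosSMulMono ℝ E]
  [OrderClosedTopology E]

theorem exists_norm_map_le_of_nonneg (hT : IsSublinear T) (hmono : Monotone T) (R : ℝ) :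
    ∃ M : ℝ, ∀ u : E, 0 ≤ u → ‖u‖ ≤ R → ‖T u‖ ≤ M := by
  by_contra! hunbdd
  choose u hu huR hTu using fun n : ℕ => hunbdd (4 ^ n)
  let w : ℕ → E := fun n => (1 / 2 : ℝ) ^ n • u n
  have hw : ∀ n, 0 ≤ w n := fun n => smul_nonneg (by positivity) (hu n)
  have hsum : Summable w := by
    refine .of_norm_bounded (summable_geometric_two.mul_right R) fun n => ?_
    rw [norm_smul, norm_pow, Real.norm_of_nonneg one_half_pos.le]
    gcongr
    exact huR n
  have hbound : ∀ n : ℕ, (2 : ℝ) ^ n < ‖T (∑' n, w n)‖ := fun n =>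
    calc (2 : ℝ) ^ n = (1 / 2) ^ n * 4 ^ n := by rw [← mul_pow]; norm_num
      _ < (1 / 2) ^ n * ‖T (u n)‖ := by gcongr; exact hTu n
      _ = ‖T (w n)‖ := by
        rw [hT.map_smul _ (by positivity), norm_smul, norm_pow, Real.norm_of_nonneg one_half_pos.le]
      _ ≤ ‖T (∑' n, w n)‖ := by
        refine norm_le_norm_of_abs_le_abs ?_
        rw [abs_of_nonneg (hT.map_nonneg hmono (hw n))]
        exact (hmono (hsum.le_tsum n fun m _ => hw m)).trans (le_abs_self _)
  obtain ⟨n, hn⟩ := pow_unbounded_of_one_lt ‖T (∑' n, w n)‖ one_lt_two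
  exact (hn.trans (hbound n)).false

theorem continuous_of_monotone (hT : IsSublinear T) (hmono : Monotone T)
    (hgen : ∀ x : E, ∃ u v : E, 0 ≤ u ∧ 0 ≤ v ∧ x = u - v) : Continuous T := by
  obtain ⟨C, hC⟩ := exists_nonneg_ge_neg_le_norm_le hgen
  obtain ⟨M, hM⟩ := hT.exists_norm_map_le_of_nonneg hmono |C|
  refine (hT.lipschitzWith (M := M) fun x hx => ?_).continuous
  obtain ⟨u, hu, hxu, hnxu, huC⟩ := hC x
  have huR : ‖u‖ ≤ |C| := huC.trans <|
    (mul_le_mul_of_nonneg_right (le_abs_self C) (norm_nonneg x)).trans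
      (mul_le_of_le_one_right (abs_nonneg C) hx)
  have neg_le : -T x ≤ T u := by
    simpa [hT.map_zero] using (hT.map_sub_map_le 0 x).trans (hmono (by simpa using hnxu))
  exact (norm_le_norm_of_abs_le_abs
    ((abs_le'.2 ⟨hmono hxu, neg_le⟩).trans (le_abs_self _))).trans (hM u hu huR)

end IsSublinear

instance hasSolidNorm_continuousMap {X : Type*} [TopologicalSpace X] [CompactSpace X] :
    HasSolidNorm C(X, ℝ) where
  solid f g h := (ContinuousMap.norm_le _ (norm_nonneg g)).2 fun t =>
    (show |f t| ≤ |g t| from h t).trans (g.norm_coe_le_norm t)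

end AutomaticContinuity

section Functionals

variable {Y : Type*} [TopologicalSpace Y] {φ : C(Y, ℝ) → ℝ}

theorem IsWeaklyNonlinear_s15.abs_map_sub_le (hφ : IsWeaklyNonlinear_s15 1 φ) (hmono : Monotone φ)
    {f g : C(Y, ℝ)} {c ε δ : ℝ} (hδ : 0 ≤ δ) (h : ∀ x, |f x - c| ≤ ε + δ * g x) :
    |φ f - c * φ 1| ≤ ε * φ 1 + δ * φ g := by
  have upper : φ f ≤ δ * φ g + (c + ε) * φ 1 := by
    simp only [← smul_eq_mul, ← hφ.map_smul δ hδ, ← hφ.map_add_smul]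
    refine hmono fun x => ?_
    have := (abs_le.1 (h x)).2
    change f x ≤ δ * g x + (c + ε) * 1
    linarith
  have lower : (c - ε) * φ 1 ≤ φ f + δ * φ g := by
    calc (c - ε) * φ 1 = φ (0 + (c - ε) • 1) := by rw [hφ.map_add_smul, hφ.map_zero]; simp
      _ ≤ φ (f + δ • g) := hmono fun x => by
        have := (abs_le.1 (h x)).1
        change 0 + (c - ε) * 1 ≤ f x + δ * g x
        linarith
      _ ≤ φ f + φ (δ • g) := hφ.map_add_le _ _
      _ = φ f + δ * φ g := by rw [hφ.map_smul δ hδ, smul_eq_mul]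
  exact abs_le.2 ⟨by linarith, by linarith⟩

theorem IsSublinear.exists_apply_nonpos_of_map_nonpos [CompactSpace Y] (hφ : IsSublinear φ)
    (hmono : Monotone φ) (hφ1 : 0 < φ 1) {g : C(Y, ℝ)} (hg : φ g ≤ 0) : ∃ x, g x ≤ 0 := by
  by_contra! hpos
  obtain ⟨c, hc, hcg⟩ : ∃ c : ℝ, 0 < c ∧ ∀ x, c ≤ g x := by
    rcases isEmpty_or_nonempty Y with hY | hY
    · exact ⟨1, one_pos, isEmptyElim⟩
    · obtain ⟨x, -, hx⟩ := isCompact_univ.exists_isMinOn Set.univ_nonempty g.continuous.continuousOn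
      exact ⟨g x, hpos x, fun y => hx (Set.mem_univ y)⟩
  have hcφ : c * φ 1 ≤ φ g := by
    rw [← smul_eq_mul, ← hφ.map_smul c hc.le]
    exact hmono fun x => by simpa using hcg x
  linarith [mul_pos hc hφ1]

end Functionals

section MetricKorovkin

variable {M : Type*} [PseudoMetricSpace M] {K : Set M}

/-- The squared distance to `y`, as a continuous function on `K`. The point `y` is not required to
lie in `K`, since the proof that a certain point does lie in `K` goes through this function. -/
noncomputable def sqDistTo (K : Set M) (y : M) : C(K, ℝ) :=
  ⟨fun x => dist (x : M) y ^ 2, by fun_prop⟩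

theorem exists_abs_sub_le_add_mul_dist_sq {Y : Type*} [PseudoMetricSpace Y] [CompactSpace Y]
    (f : C(Y, ℝ)) {ε : ℝ} (hε : 0 < ε) :
    ∃ δ : ℝ, 0 ≤ δ ∧ ∀ x y, |f x - f y| ≤ ε + δ * dist x y ^ 2 := by
  obtain ⟨η, hη, hclose⟩ := Metric.uniformContinuous_iff.1
    (CompactSpace.uniformContinuous_of_continuous f.continuous) ε hε
  refine ⟨2 * ‖f‖ / η ^ 2, by positivity, fun x y => ?_⟩
  rcases lt_or_ge (dist x y) η with hxy | hxy
  · exact (hclose hxy).le.trans (le_add_of_nonneg_right (by positivity))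
  · calc |f x - f y| ≤ ‖f x‖ + ‖f y‖ := by
          simpa only [Real.norm_eq_abs] using norm_sub_le (f x) (f y)
      _ ≤ 2 * ‖f‖ := by linarith [f.norm_coe_le_norm x, f.norm_coe_le_norm y]
      _ = 2 * ‖f‖ / η ^ 2 * η ^ 2 := by field_simp
      _ ≤ 2 * ‖f‖ / η ^ 2 * dist x y ^ 2 := by gcongr
      _ ≤ ε + 2 * ‖f‖ / η ^ 2 * dist x y ^ 2 := le_add_of_nonneg_left hε.le

theorem IsWeaklyNonlinear_s15.map_eq_apply_mul_of_map_sqDistTo_nonpos [CompactSpace K]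
    {φ : C(K, ℝ) → ℝ} (hφ : IsWeaklyNonlinear_s15 1 φ) (hmono : Monotone φ) {s : K}
    (hs : φ (sqDistTo K s) ≤ 0) (f : C(K, ℝ)) : φ f = f s * φ 1 := by
  have hφ1 : 0 ≤ φ 1 := hφ.map_nonneg hmono zero_le_one
  refine eq_of_abs_sub_nonpos (le_of_forall_pos_le_add fun η hη => ?_)
  obtain ⟨δ, hδ, hf⟩ := exists_abs_sub_le_add_mul_dist_sq f (ε := η / (φ 1 + 1)) (by positivity)
  calc |φ f - f s * φ 1|
      ≤ η / (φ 1 + 1) * φ 1 + δ * φ (sqDistTo K s) :=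
        hφ.abs_map_sub_le hmono hδ fun x => hf x s
    _ ≤ η / (φ 1 + 1) * (φ 1 + 1) + 0 :=
        add_le_add (by gcongr; linarith) (mul_nonpos_of_nonneg_of_nonpos hδ hs)
    _ = 0 + η := by field_simp; ring

variable [CompactSpace K] {X : Type*} [TopologicalSpace X] [CompactSpace X]

theorem IsWeaklyNonlinear_s15.norm_map_sub_le {T A : C(K, ℝ) → C(X, ℝ)} (hT : IsWeaklyNonlinear_s15 1 T)
    (hmono : Monotone T) {s : X → K} (hA : ∀ f t, A f t = f (s t) * A 1 t) {f : C(K, ℝ)}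
    {ε δ r : ℝ} (hε : 0 ≤ ε) (hδ : 0 ≤ δ) (hr : 0 ≤ r)
    (hf : ∀ x y, |f x - f y| ≤ ε + δ * dist x y ^ 2) (hTr : ∀ t, T (sqDistTo K (s t)) t ≤ r) :
    ‖T f - A f‖ ≤ ε * (‖T 1 - A 1‖ + ‖A 1‖) + δ * r + ‖f‖ * ‖T 1 - A 1‖ := by
  refine (ContinuousMap.norm_le _ (by positivity)).2 fun t => ?_
  have hT1 : T 1 t ≤ ‖T 1 - A 1‖ + ‖A 1‖ :=
    calc T 1 t ≤ ‖T 1‖ := (le_abs_self _).trans ((T 1).norm_coe_le_norm t)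
      _ ≤ ‖T 1 - A 1‖ + ‖A 1‖ := norm_le_norm_sub_add _ _
  calc |T f t - A f t| = |(T f t - f (s t) * T 1 t) + f (s t) * (T 1 - A 1) t| := by
        rw [hA, ContinuousMap.sub_apply]; ring_nf
    _ ≤ |T f t - f (s t) * T 1 t| + |f (s t)| * |(T 1 - A 1) t| :=
        (abs_add_le _ _).trans_eq (by rw [abs_mul])
    _ ≤ (ε * T 1 t + δ * T (sqDistTo K (s t)) t) + ‖f‖ * ‖T 1 - A 1‖ :=
        add_le_add
          ((hT.eval t).abs_map_sub_le (fun _ _ h => hmono h t) hδ fun x => hf x (s t))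
          (mul_le_mul (f.norm_coe_le_norm _) ((T 1 - A 1).norm_coe_le_norm t) (abs_nonneg _)
            (norm_nonneg f))
    _ ≤ _ := by gcongr; exact hTr t

theorem tendsto_of_tendsto_one_of_map_sqDistTo_le {ι : Type*} {l : Filter ι}
    {T : ι → C(K, ℝ) → C(X, ℝ)} {A : C(K, ℝ) → C(X, ℝ)} (hT : ∀ n, IsWeaklyNonlinear_s15 1 (T n))
    (hmono : ∀ n, Monotone (T n)) {s : X → K} (hA : ∀ f t, A f t = f (s t) * A 1 t)
    (hone : Tendsto (fun n => T n 1) l (𝓝 (A 1))) {r : ι → ℝ} (hr0 : ∀ n, 0 ≤ r n)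
    (hr : Tendsto r l (𝓝 0)) (hTr : ∀ n t, T n (sqDistTo K (s t)) t ≤ r n) (f : C(K, ℝ)) :
    Tendsto (fun n => T n f) l (𝓝 (A f)) := by
  refine Metric.tendsto_nhds.2 fun η hη => ?_
  obtain ⟨ε, hε, hεη⟩ := exists_pos_mul_lt hη ‖A 1‖
  obtain ⟨δ, hδ, hf⟩ := exists_abs_sub_le_add_mul_dist_sq f hε
  have hone' := tendsto_iff_norm_sub_tendsto_zero.1 hone
  have hbound : Tendsto (fun n => ε * (‖T n 1 - A 1‖ + ‖A 1‖) + δ * r n + ‖f‖ * ‖T n 1 - A 1‖) l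
      (𝓝 (‖A 1‖ * ε)) := by
    convert (((hone'.add_const ‖A 1‖).const_mul ε).add (hr.const_mul δ)).add
      (hone'.const_mul ‖f‖) using 2
    ring
  filter_upwards [hbound.eventually_lt_const hεη] with n hn
  rw [dist_eq_norm]
  exact ((hT n).norm_map_sub_le (hmono n) hA hε.le hδ (hr0 n) hf (hTr n)).trans_lt hn

end MetricKorovkin

section EuclideanTestFunctions

variable {N : ℕ} {K : Set (EuclideanSpace ℝ (Fin N))} {α : ℝ}

theorem coordCM_apply (k : Fin N) (x : K) : coordCM K k x = x.1 k :=
  rfl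

theorem testP_apply (x : K) : testP K α x = ∑ k, (x.1 k + α) ^ 2 := by
  simp [testP, coordCM_apply]

theorem testQ_apply (k : Fin N) (x : K) : testQ K α k x = -(x.1 k + α) := by
  simp [testQ, coordCM_apply, sub_eq_add_neg, add_comm]

theorem sqDistTo_eq_testP_add_testQ (K : Set (EuclideanSpace ℝ (Fin N))) (α : ℝ)
    (y : EuclideanSpace ℝ (Fin N)) :
    sqDistTo K y = testP K α + ∑ k, (2 * (y k + α)) • testQ K α k
      + (∑ k, (y k + α) ^ 2) • (1 : C(K, ℝ)) := by
  ext x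
  simp only [sqDistTo, ContinuousMap.coe_mk, EuclideanSpace.dist_sq_eq, Real.dist_eq, sq_abs,
    ContinuousMap.add_apply, ContinuousMap.sum_apply, ContinuousMap.smul_apply,
    ContinuousMap.one_apply, testP_apply, testQ_apply, smul_eq_mul, mul_one,
    ← Finset.sum_add_distrib]
  exact Finset.sum_congr rfl fun k _ => by ring

theorem IsSublinear.map_sqDistTo_le {φ : C(K, ℝ) → ℝ} (hφ : IsSublinear φ)
    {y : EuclideanSpace ℝ (Fin N)} (hy : ∀ k, 0 ≤ y k + α) :
    φ (sqDistTo K y) ≤ φ (testP K α) + ∑ k, 2 * (y k + α) * φ (testQ K α k)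
      + (∑ k, (y k + α) ^ 2) * φ 1 := by
  rw [sqDistTo_eq_testP_add_testQ K α]
  refine (hφ.map_add_le _ _).trans (add_le_add ((hφ.map_add_le _ _).trans ?_) ?_)
  · exact add_le_add_right
      (hφ.map_sum_smul_le _ (fun k => mul_nonneg zero_le_two (hy k)) _) _
  · exact (hφ.map_smul _ (Finset.sum_nonneg fun k _ => sq_nonneg _) _).le

variable [CompactSpace K]

theorem add_nonneg_of_posDeficit_le (hα : posDeficit K ≤ α) (x : K) (k : Fin N) :
    0 ≤ x.1 k + α := by
  obtain ⟨R, hR⟩ := (isCompact_iff_compactSpace.2 ‹_› : IsCompact K).isBounded.exists_norm_le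
  have coord_ge : ∀ y ∈ K, ∀ j, -R ≤ y j := fun y hy j =>
    (abs_le.1 ((PiLp.norm_apply_le y j).trans (hR y hy))).1
  suffices -x.1 k ≤ posDeficit K by linarith
  refine le_csInf ⟨|R|, abs_nonneg R, fun y hy j => ?_⟩ fun a ha => ?_
  · linarith [coord_ge y hy j, le_abs_self R]
  · linarith [ha.2 x x.2 k]

theorem IsWeaklyNonlinear_s15.exists_forall_map_eq_apply_mul {φ : C(K, ℝ) → ℝ}
    (hφ : IsWeaklyNonlinear_s15 1 φ) (hmono : Monotone φ) (hφ1 : 0 < φ 1) (hα : posDeficit K ≤ α)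
    (hid : φ 1 * φ (testP K α) = ∑ k, φ (testQ K α k) ^ 2) :
    ∃ s : K, ∀ f, φ f = f s * φ 1 := by
  let y : EuclideanSpace ℝ (Fin N) := WithLp.toLp 2 fun k => -φ (testQ K α k) / φ 1 - α
  have hq : ∀ k, φ (testQ K α k) = -((y k + α) * φ 1) := fun k => by simp [y, hφ1.ne']
  have hy : ∀ k, 0 ≤ y k + α := fun k => by
    have hqk : testQ K α k ≤ 0 := fun x => by
      change testQ K α k x ≤ 0
      rw [testQ_apply]
      exact neg_nonpos.2 (add_nonneg_of_posDeficit_le hα x k)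
    have hφq : φ (testQ K α k) ≤ 0 := hφ.map_zero ▸ hmono hqk
    simpa [y] using div_nonneg (neg_nonneg.2 hφq) hφ1.le
  have hp : φ (testP K α) = (∑ k, (y k + α) ^ 2) * φ 1 := by
    refine mul_left_cancel₀ hφ1.ne' (hid.trans ?_)
    rw [Finset.sum_mul, Finset.mul_sum]
    exact Finset.sum_congr rfl fun k _ => by rw [hq]; ring
  have hφy : φ (sqDistTo K y) ≤ 0 := by
    refine (hφ.map_sqDistTo_le hy).trans_eq ?_
    rw [hp, Finset.sum_mul, ← Finset.sum_add_distrib, ← Finset.sum_add_distrib]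
    exact Finset.sum_eq_zero fun k _ => by rw [hq]; ring
  obtain ⟨s, hs⟩ := hφ.exists_apply_nonpos_of_map_nonpos hmono hφ1 hφy
  have hsy : s.1 = y := dist_eq_zero.1 (pow_eq_zero_iff two_ne_zero |>.1
    (le_antisymm hs (sq_nonneg _)))
  exact ⟨s, hφ.map_eq_apply_mul_of_map_sqDistTo_nonpos hmono (hsy ▸ hφy)⟩

variable {X : Type*} [TopologicalSpace X] [CompactSpace X]

theorem IsWeaklyNonlinear_s15.map_sqDistTo_apply_le {T A : C(K, ℝ) → C(X, ℝ)}
    (hT : IsWeaklyNonlinear_s15 1 T) (hα : posDeficit K ≤ α) {s : K} {t : X}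
    (hA : ∀ f, A f t = f s * A 1 t) :
    T (sqDistTo K s) t ≤ ‖T (testP K α) - A (testP K α)‖
      + ∑ k, 2 * ‖testQ K α k‖ * ‖T (testQ K α k) - A (testQ K α k)‖
      + ‖testP K α‖ * ‖T 1 - A 1‖ := by
  have hs : ∀ k, 0 ≤ s.1 k + α := add_nonneg_of_posDeficit_le hα s
  have err_le : ∀ f, (T f - A f) t ≤ ‖T f - A f‖ := fun f =>
    (le_abs_self _).trans ((T f - A f).norm_coe_le_norm t)
  have q_le : ∀ k, s.1 k + α ≤ ‖testQ K α k‖ := fun k => by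
    simpa [testQ_apply] using (neg_le_abs _).trans ((testQ K α k).norm_coe_le_norm s)
  have p_nonneg : 0 ≤ testP K α s := by rw [testP_apply]; positivity
  have p_le : testP K α s ≤ ‖testP K α‖ := (le_abs_self _).trans ((testP K α).norm_coe_le_norm s)
  have hAzero : A (testP K α) t + ∑ k, 2 * (s.1 k + α) * A (testQ K α k) t
      + (∑ k, (s.1 k + α) ^ 2) * A 1 t = 0 := by
    rw [hA (testP K α), testP_apply, Finset.sum_mul, ← Finset.sum_add_distrib,
      ← Finset.sum_add_distrib]
    exact Finset.sum_eq_zero fun k _ => by rw [hA (testQ K α k), testQ_apply]; ring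
  calc T (sqDistTo K s) t
      ≤ T (testP K α) t + ∑ k, 2 * (s.1 k + α) * T (testQ K α k) t
          + (∑ k, (s.1 k + α) ^ 2) * T 1 t := (hT.eval t).map_sqDistTo_le hs
    _ = (T (testP K α) - A (testP K α)) t
          + ∑ k, 2 * (s.1 k + α) * (T (testQ K α k) - A (testQ K α k)) t
          + testP K α s * (T 1 - A 1) t := by
        simp only [ContinuousMap.sub_apply, mul_sub, Finset.sum_sub_distrib, testP_apply]
        linarith
    _ ≤ _ := by
        refine add_le_add (add_le_add (err_le _) (Finset.sum_le_sum fun k _ => ?_)) ?_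
        · exact mul_le_mul_of_nonneg (mul_le_mul_of_nonneg_left (q_le k) zero_le_two) (err_le _)
            (mul_nonneg zero_le_two (hs k)) (norm_nonneg _)
        · exact mul_le_mul_of_nonneg p_le (err_le _) p_nonneg (norm_nonneg _)

theorem tendsto_of_tendsto_testP_testQ {ι : Type*} {l : Filter ι} {T : ι → C(K, ℝ) → C(X, ℝ)}
    {A : C(K, ℝ) → C(X, ℝ)} (hT : ∀ n, IsWeaklyNonlinear_s15 1 (T n)) (hTmono : ∀ n, Monotone (T n))
    (hA : IsWeaklyNonlinear_s15 1 A) (hAmono : Monotone A) (hA1 : ∀ t, 0 < A 1 t)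
    (hα : posDeficit K ≤ α) (hid : A 1 * A (testP K α) = ∑ k, A (testQ K α k) ^ 2)
    (hone : Tendsto (fun n => T n 1) l (𝓝 (A 1)))
    (hq : ∀ k, Tendsto (fun n => T n (testQ K α k)) l (𝓝 (A (testQ K α k))))
    (hp : Tendsto (fun n => T n (testP K α)) l (𝓝 (A (testP K α)))) (f : C(K, ℝ)) :
    Tendsto (fun n => T n f) l (𝓝 (A f)) := by
  choose s hs using fun t => (hA.eval t).exists_forall_map_eq_apply_mul
    (fun _ _ h => hAmono h t) (hA1 t) hα (by simpa using congr($hid t))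
  refine tendsto_of_tendsto_one_of_map_sqDistTo_le hT hTmono (fun f t => hs t f) hone
    (fun n => by positivity) ?_ (fun n t => (hT n).map_sqDistTo_apply_le hα (hs t)) f
  rw [tendsto_iff_norm_sub_tendsto_zero] at hone hp
  have hq' := fun k => tendsto_iff_norm_sub_tendsto_zero.1 (hq k)
  simpa using (hp.add (tendsto_finsetSum Finset.univ fun k _ =>
    (hq' k).const_mul (2 * ‖testQ K α k‖))).add (hone.const_mul ‖testP K α‖)

end EuclideanTestFunctions

theorem korovkin_ordered_banach_space_general
    {N : ℕ} {K : Set (EuclideanSpace ℝ (Fin N))} [CompactSpace K]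
    {E : Type*} [NormedAddCommGroup E] [NormedSpace ℝ E] [CompleteSpace E]
    [Preorder E] [IsOrderedAddMonoid E] [PosSMulMono ℝ E] [OrderClosedTopology E]
    (hgen : ∀ x : E, ∃ u v : E, 0 ≤ u ∧ 0 ≤ v ∧ x = u - v)
    {i : C(K, ℝ) →ₗ[ℝ] E} (himono : Monotone i) (hidense : DenseRange i)
    {X : Type*} [TopologicalSpace X] [CompactSpace X]
    {ι : Type*} {l : Filter ι} {T : ι → E → C(X, ℝ)} {A : E → C(X, ℝ)}
    (hT : ∀ n, IsWeaklyNonlinear_s15 (i 1) (T n)) (hTmono : ∀ n, Monotone (T n))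
    (hA : IsWeaklyNonlinear_s15 (i 1) A) (hAmono : Monotone A) (hA1 : ∀ t, 0 < A (i 1) t)
    {α : ℝ} (hα : posDeficit K ≤ α)
    (hid : A (i 1) * A (i (testP K α)) = ∑ k, A (i (testQ K α k)) ^ 2)
    (hTbdd : ∃ M : ℝ, ∀ n f, ‖f‖ ≤ 1 → ‖T n f‖ ≤ M) :
    (∀ f, Tendsto (fun n => T n f) l (𝓝 (A f))) ↔
      Tendsto (fun n => T n (i 1)) l (𝓝 (A (i 1))) ∧
      (∀ k, Tendsto (fun n => T n (i (testQ K α k))) l (𝓝 (A (i (testQ K α k))))) ∧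
      Tendsto (fun n => T n (i (testP K α))) l (𝓝 (A (i (testP K α)))) := by
  refine ⟨fun h => ⟨h _, fun k => h _, h _⟩, fun ⟨hone, hq, hp⟩ f => ?_⟩
  have hrange : ∀ g : C(K, ℝ), Tendsto (fun n => T n (i g)) l (𝓝 (A (i g))) :=
    tendsto_of_tendsto_testP_testQ (fun n => (hT n).comp_linearMap)
      (fun n => (hTmono n).comp himono) hA.comp_linearMap (hAmono.comp himono) hA1 hα hid hone hq hp
  obtain ⟨M, hM⟩ := hTbdd
  have hequi := LipschitzWith.uniformEquicontinuous T _ fun n => (hT n).lipschitzWith (hM n)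
  have hAcont : Continuous A := hA.continuous_of_monotone hAmono hgen
  exact (hequi.equicontinuous f).tendsto_of_mem_closure hAcont.continuousWithinAt
    (Set.forall_mem_range.2 hrange) (hidense f)

/-- **Korovkin-type theorem on an ordered Banach space containing `C(K)` densely
(Theorem 4).** Let `i : C(K) → E` be an injective positive linear map with dense image into an
ordered Banach space `E`, let `T_n, A : E → C(X)` be sublinear, monotone operators,
translatable with respect to `e = i 1`, with `A(e)` strictly positive,
`A(e)·A(i p) = Σ_k (A(i q_k))²` for some `α ≥ α(K,u)`, and `sup_n ‖T_n‖ < ∞`. Then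
`‖T_n f − A f‖ → 0` for all `f ∈ E` iff it holds for the `N + 2` test elements
`e, i q_1, …, i q_N, i p`. -/
theorem korovkin_ordered_banach_space
    {N : ℕ} (K : Set (EuclideanSpace ℝ (Fin N))) [CompactSpace K]
    {E : Type*} [NormedAddCommGroup E] [NormedSpace ℝ E] [CompleteSpace E] [PartialOrder E]
    (hadd : ∀ x y z : E, x ≤ y → x + z ≤ y + z)
    (hsmulE : ∀ (c : ℝ) (x y : E), 0 ≤ c → x ≤ y → c • x ≤ c • y)
    (hclosed : IsClosed {x : E | 0 ≤ x})
    (hgen : ∀ x : E, ∃ u v : E, 0 ≤ u ∧ 0 ≤ v ∧ x = u - v)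
    (hnormmono : ∀ x y : E, 0 ≤ x → x ≤ y → ‖x‖ ≤ ‖y‖)
    (i : C(K, ℝ) →ₗ[ℝ] E) (hi : Function.Injective i)
    (hipos : ∀ f : C(K, ℝ), 0 ≤ f → 0 ≤ i f) (hidense : DenseRange i)
    {X : Type*} [TopologicalSpace X] [CompactSpace X] [T2Space X]
    (T : ℕ → E → C(X, ℝ)) (A : E → C(X, ℝ))
    (hTsub : ∀ n, ∀ f g : E, T n (f + g) ≤ T n f + T n g)
    (hTpos : ∀ n, ∀ (a : ℝ), 0 ≤ a → ∀ f : E, T n (a • f) = a • T n f)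
    (hTtr : ∀ n, ∀ f : E, ∀ a : ℝ, 0 ≤ a → T n (f + a • i 1) = T n f + a • T n (i 1))
    (hTmono : ∀ n, Monotone (T n))
    (hAsub : ∀ f g : E, A (f + g) ≤ A f + A g)
    (hApos : ∀ (a : ℝ), 0 ≤ a → ∀ f : E, A (a • f) = a • A f)
    (hAtr : ∀ f : E, ∀ a : ℝ, 0 ≤ a → A (f + a • i 1) = A f + a • A (i 1))
    (hAmono : Monotone A)
    (hAepos : ∀ t : X, 0 < A (i 1) t)
    (α : ℝ) (hα : posDeficit K ≤ α)
    (hAfe : A (i 1) * A (i (testP K α)) = ∑ k : Fin N, (A (i (testQ K α k))) ^ 2)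
    (hTbdd : ∃ M : ℝ, ∀ n, ∀ f : E, ‖f‖ ≤ 1 → ‖T n f‖ ≤ M) :
    (∀ f : E, Tendsto (fun n => ‖T n f - A f‖) atTop (nhds 0)) ↔
      (Tendsto (fun n => ‖T n (i 1) - A (i 1)‖) atTop (nhds 0) ∧
       (∀ k : Fin N, Tendsto (fun n => ‖T n (i (testQ K α k)) - A (i (testQ K α k))‖)
          atTop (nhds 0)) ∧
       Tendsto (fun n => ‖T n (i (testP K α)) - A (i (testP K α))‖) atTop (nhds 0)) := by
  have : IsOrderedAddMonoid E := { add_le_add_left := fun x y h z => hadd x y z h }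
  have : PosSMulMono ℝ E := ⟨fun c hc x y h => hsmulE c x y hc h⟩
  have : OrderClosedTopology E := ⟨isClosed_le_of_isClosed_nonneg hclosed⟩
  have himono : Monotone i := fun f g h => by simpa using hipos (g - f) (sub_nonneg.2 h)
  simp only [← tendsto_iff_norm_sub_tendsto_zero]
  exact korovkin_ordered_banach_space_general hgen himono hidense
    (fun n => ⟨⟨hTsub n, hTpos n⟩, hTtr n⟩) hTmono ⟨⟨hAsub, hApos⟩, hAtr⟩ hAmono hAepos hα hAfe
    hTbdd
end
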